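/- Let u ∈ W^{n,∞}(x_{i-1}, x_i) on an element of length h ≤ 1, and let u_{i,n} = ((2n-1)/h) ∫_{τ_i} u'(x) ψ_{i,n}'(x) dx · (normalizing so that u_{i,n} is the coefficient of ψ_{i,n} in the Lobatto expansion). Then |u_{i,n}| ≤ C_n h^n |u|_{W^{n,∞}(τ_i)}, where C_n depends only on n. -/

import Mathlib

open MeasureTheory intervalIntegral

/-- Legendre polynomial via the Rodrigues formula. -/
noncomputable def legendreP (n : ℕ) : ℝ → ℝ :=
  fun x => (1 / (2 ^ n * (n.factorial : ℝ))) * iteratedDeriv n (fun y => (y ^ 2 - 1) ^ n) x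

/-- Standard Lobatto polynomials on the reference interval `[-1,1]`. -/
noncomputable def lobatto : ℕ → ℝ → ℝ
  | 0 => fun ξ => (1 - ξ) / 2
  | 1 => fun ξ => (1 + ξ) / 2
  | (n + 2) => fun ξ => ∫ t in (-1 : ℝ)..ξ, legendreP (n + 1) t

/-- Lobatto polynomial affinely mapped to the element `(a,b)`. -/
noncomputable def lobattoMap (a b : ℝ) (n : ℕ) (x : ℝ) : ℝ :=
  lobatto n ((2 * x - a - b) / (b - a))

/-!
Write `k = n - 1`, `h = b - a` and `w = (x - a) (b - x)`. By the Rodrigues formula, `ψₙ'` is, up to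
sign, `c = 2 / (k! h ^ (k + 1))` times the `k`-th derivative of `w ^ k`. Since `w ^ k` vanishes to
order `k` at both endpoints, integrating by parts `k` times gives `∫ v ψₙ' = c ∫ v⁽ᵏ⁾ w ^ k` for
every smooth `v`. Taking `v = u'` and `v = ψₙ'`, whose `k`-th derivative is the constant `c (2k)!`,
shows that the coefficient is `k! h ^ n / (2 (2k)!)` times the average of `u⁽ⁿ⁾` with respect to the
positive weight `w ^ k`.
-/

open Set Polynomial
open scoped Nat

section Polynomial

theorem iterate_derivative_eq_C_of_natDegree_le {R : Type*} [Semiring R] {p : R[X]} {n : ℕ}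
    (hp : p.natDegree ≤ n) : derivative^[n] p = C (n ! • p.coeff n) := by
  have hdeg : (derivative^[n] p).natDegree ≤ 0 :=
    (natDegree_iterate_derivative p n).trans (by omega)
  rw [eq_C_of_natDegree_le_zero hdeg, coeff_iterate_derivative, zero_add, Nat.descFactorial_self]

theorem eval_iterate_derivative_eq_zero_of_pow_dvd {R : Type*} [CommRing R] {p : R[X]} {c : R}
    {j k : ℕ} (hjk : j < k) (hp : (X - C c) ^ k ∣ p) : (derivative^[j] p).eval c = 0 :=
  dvd_iff_isRoot.1 <| (dvd_pow_self _ (Nat.sub_pos_of_lt hjk).ne').trans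
    (pow_sub_dvd_iterate_derivative_of_pow_dvd j hp)

theorem iteratedDerivWithin_eval {𝕜 : Type*} [NontriviallyNormedField 𝕜] {s : Set 𝕜}
    (hs : UniqueDiffOn 𝕜 s) (p : 𝕜[X]) (k : ℕ) {x : 𝕜} (hx : x ∈ s) :
    iteratedDerivWithin k (fun y => p.eval y) s x = (derivative^[k] p).eval x := by
  induction k generalizing p with
  | zero => simp
  | succ k ih =>
    have hderiv : EqOn (derivWithin (fun y => p.eval y) s) (fun y => p.derivative.eval y) s :=
      fun y hy => p.derivWithin (hs y hy)
    rw [iteratedDerivWithin_succ', iteratedDerivWithin_congr hderiv hx, ih,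
      Function.iterate_succ_apply]

theorem iteratedDeriv_eval {𝕜 : Type*} [NontriviallyNormedField 𝕜] (p : 𝕜[X]) (k : ℕ) (x : 𝕜) :
    iteratedDeriv k (fun y => p.eval y) x = (derivative^[k] p).eval x := by
  rw [← iteratedDerivWithin_univ, iteratedDerivWithin_eval uniqueDiffOn_univ p k (mem_univ x)]

end Polynomial

section Integral

theorem integral_mul_iteratedDerivWithin_eq {A : Type*} [NormedRing A] [NormedAlgebra ℝ A]
    [CompleteSpace A] {a b : ℝ} (hab : a < b) {k : ℕ} {v w : ℝ → A}
    (hv : ContDiffOn ℝ k v (Icc a b)) (hw : ContDiffOn ℝ k w (Icc a b))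
    (hwa : ∀ j < k, iteratedDerivWithin j w (Icc a b) a = 0)
    (hwb : ∀ j < k, iteratedDerivWithin j w (Icc a b) b = 0) :
    ∫ x in a..b, v x * iteratedDerivWithin k w (Icc a b) x =
      (-1) ^ k * ∫ x in a..b, iteratedDerivWithin k v (Icc a b) x * w x := by
  have hs : UniqueDiffOn ℝ (Icc a b) := uniqueDiffOn_Icc hab
  have huIcc : uIcc a b = Icc a b := uIcc_of_le hab.le
  induction k generalizing v with
  | zero => simp
  | succ k ih =>
    have hv' : ContDiffOn ℝ k (derivWithin v (Icc a b)) (Icc a b) := hv.derivWithin hs le_rfl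
    have hv_deriv : ∀ x ∈ Icc a b,
        HasDerivWithinAt v (derivWithin v (Icc a b) x) (Icc a b) x :=
      fun x hx => (hv.differentiableOn (by simp) x hx).hasDerivWithinAt
    have hw_deriv : ∀ x ∈ Icc a b, HasDerivWithinAt (iteratedDerivWithin k w (Icc a b))
        (iteratedDerivWithin (k + 1) w (Icc a b) x) (Icc a b) x := by
      intro x hx
      rw [iteratedDerivWithin_succ]
      exact (hw.differentiableOn_iteratedDerivWithin (by exact_mod_cast k.lt_succ_self)
        hs x hx).hasDerivWithinAt
    have hw_top := hw.continuousOn_iteratedDerivWithin le_rfl hs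
    have hparts : ∫ x in a..b, v x * iteratedDerivWithin (k + 1) w (Icc a b) x =
        -∫ x in a..b, derivWithin v (Icc a b) x * iteratedDerivWithin k w (Icc a b) x := by
      rw [integral_mul_deriv_eq_deriv_mul_of_hasDerivWithinAt (by rwa [huIcc]) (by rwa [huIcc])
        (hv'.continuousOn.intervalIntegrable_of_Icc hab.le)
        (hw_top.intervalIntegrable_of_Icc hab.le), hwa k k.lt_succ_self, hwb k k.lt_succ_self,
        mul_zero, mul_zero, sub_zero, zero_sub]
    rw [hparts, ih hv' (hw.of_le (by exact_mod_cast k.le_succ))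
      (fun j hj => hwa j (hj.trans k.lt_succ_self)) (fun j hj => hwb j (hj.trans k.lt_succ_self)),
      iteratedDerivWithin_succ', pow_succ', neg_one_mul, neg_mul]

theorem abs_integral_mul_le_of_nonneg {a b M : ℝ} {μ : Measure ℝ} {f w : ℝ → ℝ} (hab : a ≤ b)
    (hf : ∀ x ∈ Icc a b, |f x| ≤ M) (hw : ∀ x ∈ Icc a b, 0 ≤ w x)
    (hwi : IntervalIntegrable w μ a b) :
    |∫ x in a..b, f x * w x ∂μ| ≤ M * ∫ x in a..b, w x ∂μ := by
  rw [← intervalIntegral.integral_const_mul, ← Real.norm_eq_abs]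
  refine norm_integral_le_of_norm_le hab (.of_forall fun x hx => ?_) (hwi.const_mul M)
  have hx : x ∈ Icc a b := Ioc_subset_Icc_self hx
  rw [Real.norm_eq_abs, abs_mul, abs_of_nonneg (hw x hx)]
  exact mul_le_mul_of_nonneg_right (hf x hx) (hw x hx)

end Integral

section Bubble

/-- The quadratic bubble of the element `(a, b)`, positive inside and zero at both nodes. Its
`k`-th power replaces `(y ^ 2 - 1) ^ k` in the Rodrigues formula transported to the element. -/
noncomputable def bubble (a b : ℝ) : ℝ[X] :=
  (X - C a) * (C b - X)

variable {a b : ℝ}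

theorem eval_bubble (a b x : ℝ) : (bubble a b).eval x = (x - a) * (b - x) := by
  simp only [bubble, eval_mul, eval_sub, eval_X, eval_C]

theorem eval_bubble_pow_nonneg (k : ℕ) {x : ℝ} (hx : x ∈ Icc a b) :
    0 ≤ (bubble a b ^ k).eval x := by
  rw [eval_pow, eval_bubble]
  exact pow_nonneg (mul_nonneg (sub_nonneg.2 hx.1) (sub_nonneg.2 hx.2)) k

theorem integral_bubble_pow_pos (hab : a < b) (k : ℕ) :
    0 < ∫ x in a..b, (bubble a b ^ k).eval x := by
  refine intervalIntegral_pos_of_pos_on ((bubble a b ^ k).continuous.intervalIntegrable a b)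
    (fun x hx => ?_) hab
  rw [eval_pow, eval_bubble]
  exact pow_pos (mul_pos (sub_pos.2 hx.1) (sub_pos.2 hx.2)) k

theorem iterate_derivative_two_mul_bubble_pow (a b : ℝ) (k : ℕ) :
    derivative^[2 * k] (bubble a b ^ k) = C ((-1) ^ k * ((2 * k)! : ℝ)) := by
  have hdeg : (bubble a b).natDegree ≤ 2 := by unfold bubble; compute_degree
  have hcoeff : (bubble a b).coeff 2 = -1 := by unfold bubble; compute_degree!
  have hdeg_pow : (bubble a b ^ k).natDegree ≤ 2 * k := by
    simpa only [mul_comm] using natDegree_pow_le_of_le k hdeg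
  have hcoeff_pow : (bubble a b ^ k).coeff (2 * k) = (-1) ^ k := by
    rw [mul_comm, coeff_pow_of_natDegree_le hdeg, hcoeff]
  rw [iterate_derivative_eq_C_of_natDegree_le hdeg_pow, hcoeff_pow, nsmul_eq_mul, mul_comm]

theorem integral_mul_iterate_derivative_bubble_pow (hab : a < b) {k : ℕ} {v : ℝ → ℝ}
    (hv : ContDiffOn ℝ k v (Icc a b)) :
    ∫ x in a..b, v x * (derivative^[k] (bubble a b ^ k)).eval x =
      (-1) ^ k * ∫ x in a..b, iteratedDerivWithin k v (Icc a b) x * (bubble a b ^ k).eval x := by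
  have hs : UniqueDiffOn ℝ (Icc a b) := uniqueDiffOn_Icc hab
  have hdvd_left : (X - C a) ^ k ∣ bubble a b ^ k := pow_dvd_pow_of_dvd (dvd_mul_right _ _) k
  have hdvd_right : (X - C b) ^ k ∣ bubble a b ^ k :=
    pow_dvd_pow_of_dvd (.mul_left ((dvd_sub_comm).1 dvd_rfl) _) k
  rw [← integral_mul_iteratedDerivWithin_eq (w := fun x => (bubble a b ^ k).eval x) hab hv
    ((bubble a b ^ k).contDiff_aeval k).contDiffOn]
  · refine integral_congr fun x hx => ?_
    rw [uIcc_of_le hab.le] at hx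
    simp only [iteratedDerivWithin_eval hs _ _ hx]
  · intro j hj
    rw [iteratedDerivWithin_eval hs _ _ (left_mem_Icc.2 hab.le)]
    exact eval_iterate_derivative_eq_zero_of_pow_dvd hj hdvd_left
  · intro j hj
    rw [iteratedDerivWithin_eval hs _ _ (right_mem_Icc.2 hab.le)]
    exact eval_iterate_derivative_eq_zero_of_pow_dvd hj hdvd_right

end Bubble

section Lobatto

theorem continuous_legendreP (k : ℕ) : Continuous (legendreP k) := by
  have hpoly : (fun y : ℝ => (y ^ 2 - 1) ^ k) = fun y => ((X ^ 2 - 1 : ℝ[X]) ^ k).eval y := by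
    simp
  unfold legendreP
  simp only [hpoly, iteratedDeriv_eval]
  fun_prop

variable {a b : ℝ} {k : ℕ}

theorem legendreP_comp_affine (hab : a ≠ b) (k : ℕ) (x : ℝ) :
    legendreP k ((2 * x - a - b) / (b - a)) =
      (-1) ^ k / (k ! * (b - a) ^ k) * (derivative^[k] (bubble a b ^ k)).eval x := by
  have hh : b - a ≠ 0 := sub_ne_zero.2 hab.symm
  set f : ℝ → ℝ := fun y => (y ^ 2 - 1) ^ k
  set c : ℝ := -(a + b) / (b - a)
  have hf : ContDiff ℝ k fun y => f (y + c) := by fun_prop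
  have hpull (y : ℝ) : f (2 / (b - a) * y + c) =
      (-4 / (b - a) ^ 2) ^ k * (bubble a b ^ k).eval y := by
    rw [eval_pow, eval_bubble, ← mul_pow]
    simp only [f, c]
    congr 1
    field_simp
    ring
  have hchain : (2 / (b - a)) ^ k * iteratedDeriv k f (2 / (b - a) * x + c) =
      (-4 / (b - a) ^ 2) ^ k * (derivative^[k] (bubble a b ^ k)).eval x := by
    have h := congrFun (iteratedDeriv_comp_const_mul hf (2 / (b - a))) x
    simp only [hpull, iteratedDeriv_const_mul_field, iteratedDeriv_eval,
      iteratedDeriv_comp_add_const] at h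
    exact h.symm
  have harg : (2 * x - a - b) / (b - a) = 2 / (b - a) * x + c := by
    simp only [c]; ring
  have hratio : (-4 / (b - a) ^ 2) ^ k = (2 / (b - a)) ^ k * ((-1) ^ k * (2 / (b - a)) ^ k) := by
    rw [← mul_pow, ← mul_pow]; congr 1; field_simp; norm_num
  rw [hratio, mul_assoc, mul_right_inj' (by positivity)] at hchain
  rw [legendreP, harg, hchain, div_pow]
  field_simp

theorem hasDerivAt_lobatto (hk : k ≠ 0) (ξ : ℝ) :
    HasDerivAt (lobatto (k + 1)) (legendreP k ξ) ξ := by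
  obtain ⟨m, rfl⟩ := Nat.exists_eq_succ_of_ne_zero hk
  exact (continuous_legendreP (m + 1)).integral_hasStrictDerivAt _ _ |>.hasDerivAt

theorem deriv_lobattoMap (hab : a ≠ b) (hk : k ≠ 0) (x : ℝ) :
    deriv (lobattoMap a b (k + 1)) x =
      (-1) ^ k * (2 / (k ! * (b - a) ^ (k + 1))) * (derivative^[k] (bubble a b ^ k)).eval x := by
  have hξ : HasDerivAt (fun y : ℝ => (2 * y - a - b) / (b - a)) (2 / (b - a)) x := by
    simpa using ((((hasDerivAt_id x).const_mul 2).sub_const a).sub_const b).div_const (b - a)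
  have hcomp : deriv (lobattoMap a b (k + 1)) x =
      legendreP k ((2 * x - a - b) / (b - a)) * (2 / (b - a)) :=
    ((hasDerivAt_lobatto hk _).comp x hξ).deriv
  rw [hcomp, legendreP_comp_affine hab, pow_succ]
  field_simp

theorem integral_mul_deriv_lobattoMap (hab : a < b) (hk : k ≠ 0) {v : ℝ → ℝ}
    (hv : ContDiffOn ℝ k v (Icc a b)) :
    ∫ x in a..b, v x * deriv (lobattoMap a b (k + 1)) x =
      2 / (k ! * (b - a) ^ (k + 1)) *
        ∫ x in a..b, iteratedDerivWithin k v (Icc a b) x * (bubble a b ^ k).eval x := by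
  simp only [deriv_lobattoMap hab.ne hk, mul_left_comm (v _)]
  rw [intervalIntegral.integral_const_mul, integral_mul_iterate_derivative_bubble_pow hab hv,
    mul_mul_mul_comm, pow_mul_pow_eq_one k (by norm_num), one_mul]

theorem integral_deriv_lobattoMap_sq (hab : a < b) (hk : k ≠ 0) :
    ∫ x in a..b, deriv (lobattoMap a b (k + 1)) x ^ 2 =
      (2 / (k ! * (b - a) ^ (k + 1))) ^ 2 * (2 * k)! * ∫ x in a..b, (bubble a b ^ k).eval x := by
  set c : ℝ := 2 / (k ! * (b - a) ^ (k + 1))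
  set q : ℝ[X] := C ((-1) ^ k * c) * derivative^[k] (bubble a b ^ k) with hq
  have hderiv (x : ℝ) : deriv (lobattoMap a b (k + 1)) x = q.eval x := by
    rw [deriv_lobattoMap hab.ne hk, hq, eval_C_mul]
  have hq_top (x : ℝ) : (derivative^[k] q).eval x = c * (2 * k)! := by
    rw [hq, iterate_derivative_C_mul, ← Function.iterate_add_apply, ← two_mul,
      iterate_derivative_two_mul_bubble_pow, eval_C_mul, eval_C, mul_mul_mul_comm,
      pow_mul_pow_eq_one k (by norm_num), one_mul]
  calc ∫ x in a..b, deriv (lobattoMap a b (k + 1)) x ^ 2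
      = ∫ x in a..b, q.eval x * deriv (lobattoMap a b (k + 1)) x := by
        simp only [sq, hderiv]
    _ = c * ∫ x in a..b, iteratedDerivWithin k (fun y => q.eval y) (Icc a b) x *
          (bubble a b ^ k).eval x :=
        integral_mul_deriv_lobattoMap hab hk (q.contDiff_aeval k).contDiffOn
    _ = c * ∫ x in a..b, c * (2 * k)! * (bubble a b ^ k).eval x := by
        congr 1
        refine integral_congr fun x hx => ?_
        rw [uIcc_of_le hab.le] at hx
        simp only [iteratedDerivWithin_eval (uniqueDiffOn_Icc hab) q k hx, hq_top]
    _ = c ^ 2 * (2 * k)! * ∫ x in a..b, (bubble a b ^ k).eval x := by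
        rw [intervalIntegral.integral_const_mul]; ring

end Lobatto

section Coefficient

/-- The `n`-th coefficient `u_{i,n}` of the Lobatto expansion of `u` on the element `(a, b)`: the
projection of `u'` onto the derivative of the `n`-th mapped Lobatto polynomial in `L²(a, b)`. -/
noncomputable def lobattoCoeff (a b : ℝ) (n : ℕ) (u : ℝ → ℝ) : ℝ :=
  (∫ x in a..b, deriv u x * deriv (lobattoMap a b n) x) /
    ∫ x in a..b, deriv (lobattoMap a b n) x ^ 2

variable {a b : ℝ} {u : ℝ → ℝ}

theorem lobattoCoeff_succ_eq (hab : a < b) {k : ℕ} (hk : k ≠ 0)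
    (hu : ContDiffOn ℝ (k + 1 : ℕ) u (Icc a b)) :
    lobattoCoeff a b (k + 1) u = k ! / (2 * (2 * k)!) * (b - a) ^ (k + 1) *
      ((∫ x in a..b, iteratedDerivWithin (k + 1) u (Icc a b) x * (bubble a b ^ k).eval x) /
        ∫ x in a..b, (bubble a b ^ k).eval x) := by
  have hu' : ContDiffOn ℝ k (derivWithin u (Icc a b)) (Icc a b) :=
    hu.derivWithin (uniqueDiffOn_Icc hab) le_rfl
  have hinterior : ∫ x in a..b, deriv u x * deriv (lobattoMap a b (k + 1)) x =
      ∫ x in a..b, derivWithin u (Icc a b) x * deriv (lobattoMap a b (k + 1)) x :=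
    integral_congr_Ioo_of_le hab.le fun x hx => by
      simp only [derivWithin_of_mem_nhds (Icc_mem_nhds hx.1 hx.2)]
  have hh : b - a ≠ 0 := (sub_pos.2 hab).ne'
  have hbubble : ∫ x in a..b, (bubble a b ^ k).eval x ≠ 0 := (integral_bubble_pow_pos hab k).ne'
  rw [lobattoCoeff, hinterior, integral_mul_deriv_lobattoMap hab hk hu',
    integral_deriv_lobattoMap_sq hab hk, iteratedDerivWithin_succ']
  field_simp

theorem lobatto_coefficient_bound_general {n : ℕ} (hn : 2 ≤ n) {M : ℝ} (hab : a < b)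
    (hu : ContDiffOn ℝ n u (Icc a b))
    (hM : ∀ x ∈ Icc a b, |iteratedDerivWithin n u (Icc a b) x| ≤ M) :
    |lobattoCoeff a b n u| ≤ (n - 1)! / (2 * (2 * (n - 1))!) * (b - a) ^ n * M := by
  obtain ⟨k, rfl⟩ : ∃ k, n = k + 1 := ⟨n - 1, by omega⟩
  have hscale : 0 ≤ (k ! : ℝ) / (2 * (2 * k)!) * (b - a) ^ (k + 1) :=
    mul_nonneg (by positivity) (pow_nonneg (sub_nonneg.2 hab.le) _)
  have hbubble := integral_bubble_pow_pos hab k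
  have hnum := abs_integral_mul_le_of_nonneg hab.le hM (fun x hx => eval_bubble_pow_nonneg k hx)
    ((bubble a b ^ k).continuous.intervalIntegrable (μ := volume) a b)
  rw [lobattoCoeff_succ_eq hab (by omega) hu, abs_mul, abs_of_nonneg hscale, abs_div,
    abs_of_pos hbubble, Nat.add_sub_cancel]
  exact mul_le_mul_of_nonneg_left ((div_le_iff₀ hbubble).2 hnum) hscale

end Coefficient

/-- Bound for the `n`-th Lobatto expansion coefficient
`u_{i,n} = (∫ u' ψ_{i,n}')/(∫ (ψ_{i,n}')²)`:  `|u_{i,n}| ≤ C_n h^n |u|_{n,∞}`. -/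
theorem lobatto_coefficient_bound (n : ℕ) (hn : 2 ≤ n) :
    ∃ C : ℝ, 0 < C ∧
      ∀ (a b : ℝ) (u : ℝ → ℝ) (M : ℝ),
        a < b → b - a ≤ 1 → ContDiff ℝ n u →
        (∀ x ∈ Set.Icc a b, |iteratedDeriv n u x| ≤ M) →
        |(∫ x in a..b, deriv u x * deriv (lobattoMap a b n) x) /
            (∫ x in a..b, (deriv (lobattoMap a b n) x) ^ 2)|
          ≤ C * (b - a) ^ n * M := by
  refine ⟨(n - 1)! / (2 * (2 * (n - 1))!), by positivity, fun a b u M hab _ hu hM => ?_⟩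
  exact lobatto_coefficient_bound_general hn hab hu.contDiffOn fun x hx => by
    rw [iteratedDerivWithin_eq_iteratedDeriv (uniqueDiffOn_Icc hab) hu.contDiffAt hx]
    exact hM x hx
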